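/- arXiv:0711.1185 — 3 statements merged into one kernel-verified Lean document; each statement's English description precedes it below -/
import Mathlib

section
/- Let r ≥ 3 and suppose n is a positive integer and α a real number with (ln n)^{-1/(r-1)} ≤ α ≤ r^{-3}. Then every r-uniform hypergraph G on n vertices with at least α·n^r/r! edges contains a complete r-partite subgraph K_r(s,…,s,t) with r−1 parts of size s = ⌊α·(ln n)^{1/(r-1)}⌋ and one part of size t = ⌈n^{1−α^{r−2}}⌉. -/
/-!
Let `k = r - 1` and `L = log n`, where `n ≥ 2` (for `n = 1` the requested parts are trivial).
Consider the set of pairs `(y, v)`, `y` a `k`-tuple of vertices and `v` a vertex, whose entries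
form an edge; its density in `[n] ^ (k + 1)` is at least
`α` (`ordered_edges`). Repeated use of Jensen's inequality shows that a random family
`X i j` (`i < k`, `j < s`) of vertices has on average at least `n * α ^ (s ^ k)` common neighbours,
that is, vertices `v` completing every choice of one vertex from each row of `X` to an edge
(`hom_count`). Families with a repeated vertex in some row have proportion at most
`k * s ^ 2 / n` (`card_not_injective`).

As `s ^ k ≤ α ^ k * L` and `α * log (1 / α) ≤ 1 / 2`, the average is at least `n * exp (-M / 2)`
with `M = α ^ (k - 1) * L`, while the target is `n ^ (1 - α ^ (k - 1)) = n * exp (-M)` and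
`M ≥ 27`; the difference dwarfs the degenerate contribution (`numeric`). So some family with
injective rows has enough common neighbours. Distinct parts are disjoint automatically, because a
transversal with a repeated vertex cannot form an edge of size `k + 1` (`disjoint_of_edges`).
-/

namespace DenseHypergraph

open Finset

/-- Sidorenko-type inequality for complete `(k+1)`-partite patterns with parts `s, …, s, 1`: the
homomorphism density of the pattern in a nonnegative weight `w` of average `d` is at least
`d ^ (s ^ k)`. The induction absorbs the `s` copies of the first coordinate into the parameter
set `B` and applies Jensen's inequality to `t ↦ t ^ s`. -/
theorem hom_count {A : Type} [Fintype A] [Nonempty A] (s : ℕ) : ∀ (k : ℕ) {B : Type} [Fintype B]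
    [Nonempty B] (w : (Fin k → A) → B → ℝ), (∀ y v, 0 ≤ w y v) →
    ((∑ y, ∑ v, w y v) / ((Fintype.card A : ℝ) ^ k * Fintype.card B)) ^ (s ^ k) ≤
      (∑ X : Fin k → Fin s → A, ∑ v, ∏ f : Fin k → Fin s, w (fun i => X i (f i)) v) /
        ((Fintype.card A : ℝ) ^ (s * k) * Fintype.card B) := by
  intro k
  induction k with
  | zero =>
    intro B _ _ w hw
    have h : ∀ (X : Fin 0 → Fin s → A) (f : Fin 0 → Fin s),
        (fun i => X i (f i)) = default := fun X f => Subsingleton.elim _ _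
    simp [h]
  | succ k ih =>
    intro B _ _ w hw
    have hA : (0 : ℝ) < Fintype.card A := by exact_mod_cast Fintype.card_pos
    have hB : (0 : ℝ) < Fintype.card B := by exact_mod_cast Fintype.card_pos
    have key := ih (B := B × (Fin s → A))
      (fun y p => ∏ j, w (Fin.cons (p.2 j) y) p.1)
      (fun y p => prod_nonneg fun j _ => hw _ _)
    have hsum : ∑ y, ∑ v, w y v
        = ∑ p : (Fin k → A) × B, ∑ a, w (Fin.cons a p.1) p.2 := by
      rw [← (Fin.consEquiv (fun _ : Fin (k + 1) => A)).sum_comp, Fintype.sum_prod_type,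
        Fintype.sum_prod_type, sum_comm]
      refine sum_congr rfl fun y _ => ?_
      rw [sum_comm]
      rfl
    have hsum' : ∑ y, ∑ p : B × (Fin s → A), ∏ j, w (Fin.cons (p.2 j) y) p.1
        = ∑ p : (Fin k → A) × B, (∑ a, w (Fin.cons a p.1) p.2) ^ s := by
      simp only [Fintype.sum_prod_type, Fintype.sum_pow]
    have hX : ∑ X : Fin (k + 1) → Fin s → A, ∑ v, ∏ f : Fin (k + 1) → Fin s,
          w (fun i => X i (f i)) v
        = ∑ X : Fin k → Fin s → A, ∑ p : B × (Fin s → A), ∏ f : Fin k → Fin s,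
          ∏ j, w (Fin.cons (p.2 j) (fun i => X i (f i))) p.1 := by
      rw [← (Fin.consEquiv (fun _ : Fin (k + 1) => Fin s → A)).sum_comp, Fintype.sum_prod_type,
        sum_comm]
      refine sum_congr rfl fun X _ => ?_
      rw [sum_comm, Fintype.sum_prod_type]
      refine sum_congr rfl fun v _ => sum_congr rfl fun z _ => ?_
      rw [← (Fin.consEquiv (fun _ : Fin (k + 1) => Fin s)).prod_comp, Fintype.prod_prod_type,
        prod_comm]
      refine prod_congr rfl fun f _ => prod_congr rfl fun j _ => ?_
      congr 1
      funext i
      refine Fin.cases ?_ (fun i => ?_) i <;> simp [Fin.consEquiv]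
    have jensen := Real.pow_arith_mean_le_arith_mean_pow
      (univ : Finset ((Fin k → A) × B))
      (fun _ => ((Fintype.card A : ℝ) ^ k * Fintype.card B)⁻¹)
      (fun p => (∑ a, w (Fin.cons a p.1) p.2) / Fintype.card A)
      (fun _ _ => by positivity)
      (by simp; field_simp)
      (fun p _ => div_nonneg (sum_nonneg fun _ _ => hw _ _) hA.le) s
    rw [hX]
    rw [hsum'] at key
    rw [hsum]
    simp only [div_pow, ← mul_sum, ← sum_div] at jensen
    have e1 : s ^ (k + 1) = s * s ^ k := by ring
    rw [e1, pow_mul]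
    refine le_trans (pow_le_pow_left₀ (by
      apply pow_nonneg
      exact div_nonneg (sum_nonneg fun _ _ => sum_nonneg fun _ _ => hw _ _) (by positivity)) ?_ _)
      (key.trans (le_of_eq ?_))
    · refine le_trans (le_of_eq ?_) (jensen.trans (le_of_eq ?_))
      · congr 1
        field_simp
        ring
      · simp only [Fintype.card_prod, Fintype.card_fun, Fintype.card_fin, Nat.cast_mul,
          Nat.cast_pow]
        field_simp
    · simp only [Fintype.card_prod, Fintype.card_fun, Fintype.card_fin, Nat.cast_mul,
          Nat.cast_pow]
      congr 1
      ring

/-- Families with a prescribed coincidence make up a proportion of at most `1 / |A|`: overwriting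
the entry at `(i, j)` by an arbitrary element loses nothing, as that entry equals the one at
`(i, j')`. -/
theorem card_collision {A : Type} [Fintype A] [DecidableEq A] (s k : ℕ) (i : Fin k) (j j' : Fin s)
    (h : j ≠ j') :
    #{X : Fin k → Fin s → A | X i j = X i j'} * Fintype.card A ≤ Fintype.card A ^ (s * k) := by
  have : Fintype.card A ^ (s * k) = #(univ : Finset (Fin k → Fin s → A)) := by
    simp [pow_mul]
  rw [this, ← card_univ (α := A), ← card_product]
  refine card_le_card_of_injOn
    (fun p => Function.update p.1 i (Function.update (p.1 i) j p.2)) (fun _ _ => by simp) ?_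
  rintro ⟨X, a⟩ hX ⟨Y, b⟩ hY hXY
  simp only [coe_product, Set.mem_prod, coe_filter, mem_univ, true_and, Set.mem_ofPred_eq,
    coe_univ, Set.mem_univ, and_true] at hX hY
  have hp : ∀ i₁ l, Function.update X i (Function.update (X i) j a) i₁ l
      = Function.update Y i (Function.update (Y i) j b) i₁ l := fun i₁ l =>
    congrFun (congrFun hXY i₁) l
  have hab : a = b := by simpa using hp i j
  have hj' : X i j' = Y i j' := by simpa [Function.update_of_ne h.symm] using hp i j'
  refine Prod.ext ?_ hab
  funext i₁ l
  by_cases hi : i₁ = i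
  · subst hi
    by_cases hl : l = j
    · subst hl; exact hX.trans (hj'.trans hY.symm)
    · simpa [Function.update_of_ne hl] using hp i₁ l
  · simpa [Function.update_of_ne hi] using hp i₁ l

/-- Union bound: the proportion of families `X` with a repeated entry in some row is at most
`k * s ^ 2 / |A|`. -/
theorem card_not_injective {A : Type} [Fintype A] [DecidableEq A] (s k : ℕ) :
    #{X : Fin k → Fin s → A | ¬ ∀ i, Function.Injective (X i)} * Fintype.card A
      ≤ k * s ^ 2 * Fintype.card A ^ (s * k) := by
  have hsub : ({X : Fin k → Fin s → A | ¬ ∀ i, Function.Injective (X i)} : Finset _) ⊆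
      (univ ×ˢ univ.offDiag : Finset (Fin k × (Fin s × Fin s))).biUnion
        (fun p => {X : Fin k → Fin s → A | X p.1 p.2.1 = X p.1 p.2.2}) := by
    intro X hX
    simp only [mem_filter, mem_univ, true_and, not_forall, Function.Injective] at hX
    obtain ⟨i, j, j', he, hne⟩ := hX
    simp only [mem_biUnion, mem_filter, mem_univ, true_and, mem_product, mem_offDiag]
    exact ⟨(i, (j, j')), hne, he⟩
  refine (Nat.mul_le_mul_right _ ((card_le_card hsub).trans card_biUnion_le)).trans ?_
  rw [sum_mul]
  refine (sum_le_card_nsmul _ _ (Fintype.card A ^ (s * k)) ?_).trans ?_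
  · rintro ⟨i, j, j'⟩ hp
    simp only [mem_product, mem_univ, mem_offDiag, true_and] at hp
    exact card_collision s k i j j' hp
  · rw [smul_eq_mul]
    refine Nat.mul_le_mul_right _ ?_
    rw [card_product, offDiag_card]
    simp only [card_univ, Fintype.card_fin]
    rw [sq]
    exact Nat.mul_le_mul_left _ (Nat.sub_le _ _)

theorem image_univ_succ {k n : ℕ} (f : Fin (k + 1) → Fin n) :
    image f univ = insert (f (Fin.last k)) (image (fun i : Fin k => f i.castSucc) univ) := by
  ext x
  simp only [mem_image, mem_univ, true_and, mem_insert, Fin.exists_fin_succ', or_comm, eq_comm]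

/-- Every edge of a `(k+1)`-graph arises from at least `(k+1)!` ordered tuples. -/
theorem ordered_edges {k n : ℕ} (G : Finset (Finset (Fin n))) (hG : ∀ e ∈ G, #e = k + 1) :
    ((k + 1).factorial : ℝ) * #G ≤
      ∑ y : Fin k → Fin n, ∑ v, if insert v (image y univ) ∈ G then (1 : ℝ) else 0 := by
  have h : (k + 1).factorial * #G ≤
      #{p : (Fin k → Fin n) × Fin n | insert p.2 (image p.1 univ) ∈ G} := by
    have h1 : (k + 1).factorial * #G
        = #(univ : Finset (G × Equiv.Perm (Fin (k + 1)))) := by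
      simp [Fintype.card_perm, mul_comm]
    rw [h1]
    let F : G × Equiv.Perm (Fin (k + 1)) → Fin (k + 1) → Fin n :=
      fun p i => p.1.1.orderEmbOfFin (hG _ p.1.2) (p.2 i)
    have hF : ∀ p, image (F p) univ = p.1.1 := by
      intro p
      have : F p = p.1.1.orderEmbOfFin (hG _ p.1.2) ∘ p.2 := rfl
      rw [this, ← image_image, image_univ_equiv, image_orderEmbOfFin_univ]
    refine card_le_card_of_injOn
      (fun p => (fun i => F p i.castSucc, F p (Fin.last k))) ?_ ?_
    · intro p _
      simp only [coe_filter, mem_univ, true_and, Set.mem_ofPred_eq]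
      rw [← image_univ_succ, hF]
      exact p.1.2
    · intro p _ q _ hpq
      have hfg : F p = F q := by
        funext i
        refine Fin.lastCases ?_ (fun i => ?_) i
        · exact congrArg Prod.snd hpq
        · exact congrFun (congrArg Prod.fst hpq) i
      obtain ⟨⟨e, he⟩, σ⟩ := p
      obtain ⟨⟨e', he'⟩, τ⟩ := q
      have hee : e = e' := by
        have := hF (⟨e, he⟩, σ)
        rw [hfg, hF] at this
        exact this.symm
      subst hee
      refine Prod.ext rfl (Equiv.ext fun i => ?_)
      exact (e.orderEmbOfFin (hG _ he)).injective (congrFun hfg i)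
  rw [← Fintype.sum_prod_type' (fun (y : Fin k → Fin n) v =>
    if insert v (image y univ) ∈ G then (1 : ℝ) else 0), sum_boole]
  exact_mod_cast h

/-- The numerical heart, with `x = (log n) ^ (1 / k)`: the guaranteed average codegree
`n * a ^ (s ^ k)` exceeds the target size plus the loss `k * s ^ 2` from degenerate families.
Writing `M = a ^ (k - 1) * log n`, the left side is at most `2 * n * exp (-M)` and the right side is
at least `n * exp (-M / 2)`. -/
theorem numeric {k s n : ℕ} {a x : ℝ} (hk : 2 ≤ k) (hn : Real.log n = x ^ k) (hn0 : 0 < n)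
    (hx : (k + 1 : ℝ) ^ 3 ≤ x) (hax : 1 ≤ a * x) (ha : a ≤ ((k + 1 : ℝ) ^ 3)⁻¹)
    (hs : (s : ℝ) ≤ a * x) :
    (n : ℝ) ^ (1 - a ^ (k - 1)) + k * s ^ 2 < n * a ^ (s ^ k) := by
  obtain ⟨m, rfl⟩ : ∃ m, k = m + 2 := ⟨k - 2, by omega⟩
  have hn' : (0 : ℝ) < n := by exact_mod_cast hn0
  have hk2 : (27 : ℝ) ≤ ((m + 2 : ℕ) + 1 : ℝ) ^ 3 := by
    have : (3 : ℝ) ≤ ((m + 2 : ℕ) + 1 : ℝ) := by push_cast; linarith [m.cast_nonneg (α := ℝ)]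
    calc (27 : ℝ) = 3 ^ 3 := by norm_num
      _ ≤ _ := by gcongr
  have hkx : ((m + 2 : ℕ) : ℝ) ≤ x := by
    refine le_trans ?_ hx
    have h0 : (0 : ℝ) ≤ (m + 2 : ℕ) := Nat.cast_nonneg _
    nlinarith [sq_nonneg ((m + 2 : ℕ) : ℝ), mul_nonneg h0 (sq_nonneg ((m + 2 : ℕ) : ℝ))]
  have hx27 : 27 ≤ x := hk2.trans hx
  have ha0 : 0 < a := by
    by_contra h
    push Not at h
    nlinarith
  have ha27 : 27 * a ≤ 1 := by
    have : ((((m + 2 : ℕ) : ℝ) + 1) ^ 3)⁻¹ ≤ 27⁻¹ := by gcongr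
    linarith
  set L := x ^ (m + 2) with hL
  set M := a ^ (m + 1) * L with hM
  have hMx : x ≤ M := by
    have : M = (a * x) ^ (m + 1) * x := by rw [hM, hL]; ring
    rw [this]
    exact le_mul_of_one_le_left (by linarith) (one_le_pow₀ hax)
  have hL0 : 0 ≤ L := by positivity
  have hML : 27 * M ≤ L := by
    have h1 : a ^ (m + 1) ≤ a := by
      rw [pow_succ]
      exact mul_le_of_le_one_left ha0.le (pow_le_one₀ ha0.le (by linarith))
    have : M ≤ a * L := by rw [hM]; gcongr
    nlinarith
  have hxL : x ^ 2 ≤ L := by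
    rw [hL]; exact pow_le_pow_right₀ (by linarith) (by omega)
  have hnexp : (n : ℝ) = Real.exp L := by rw [← hn, Real.exp_log hn']
  -- `a * log (1 / a) ≤ 1 / 2`, from `log u ≤ u - 1` at `u = (√a)⁻¹`
  have hlog : -(1 / 2) ≤ a * Real.log a := by
    have hq : 0 < √a := Real.sqrt_pos.2 ha0
    have hsq : √a * √a = a := Real.mul_self_sqrt ha0.le
    have h1 : Real.log a = -2 * Real.log (√a)⁻¹ := by
      rw [Real.log_inv, Real.log_sqrt ha0.le]; ring
    have h2 := Real.log_le_sub_one_of_pos (inv_pos.2 hq)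
    have h3 : a * (√a)⁻¹ = √a := by
      nth_rewrite 1 [← hsq]
      field_simp
    rw [h1]
    nlinarith [sq_nonneg (√a - 1 / 2), mul_le_mul_of_nonneg_left h2 ha0.le]
  have hpow : Real.exp (-(M / 2)) ≤ a ^ (s ^ (m + 2)) := by
    have h0 : a ^ (s ^ (m + 2)) = Real.exp ((s ^ (m + 2) : ℕ) * Real.log a) := by
      rw [Real.exp_nat_mul, Real.exp_log ha0]
    rw [h0, Real.exp_le_exp]
    have h1 : ((s ^ (m + 2) : ℕ) : ℝ) ≤ a * M := by
      push_cast
      calc (s : ℝ) ^ (m + 2) ≤ (a * x) ^ (m + 2) := by gcongr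
        _ = a * M := by rw [hM, hL]; ring
    have h2 : Real.log a ≤ 0 := Real.log_nonpos ha0.le (by linarith)
    nlinarith [mul_le_mul_of_nonpos_right h1 h2]
  have hrp : (n : ℝ) ^ (1 - a ^ (m + 2 - 1)) = n * Real.exp (-M) := by
    rw [Real.rpow_def_of_pos hn', hn, hnexp, ← Real.exp_add]
    congr 1
    rw [hM, show m + 2 - 1 = m + 1 by omega]; ring
  have hdeg : ((m + 2 : ℕ) : ℝ) * s ^ 2 ≤ n * Real.exp (-M) := by
    have h1 : ((m + 2 : ℕ) : ℝ) * s ^ 2 ≤ L ^ 2 := by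
      have hs' : (s : ℝ) ≤ x := hs.trans (by nlinarith)
      calc ((m + 2 : ℕ) : ℝ) * s ^ 2 ≤ x * x ^ 2 := by gcongr
        _ ≤ (x ^ 2) ^ 2 := by nlinarith [sq_nonneg x, pow_nonneg (by linarith : 0 ≤ x) 3]
        _ ≤ L ^ 2 := by gcongr
    have h2 : L ^ 2 ≤ Real.exp (L / 8) ^ 4 := by
      have : L / 8 ≤ Real.exp (L / 8) := by linarith [Real.add_one_le_exp (L / 8)]
      calc L ^ 2 ≤ (L / 8) ^ 4 := by
            have h64 : 64 ≤ L := by nlinarith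
            have : (64 : ℝ) ^ 2 ≤ L ^ 2 := by gcongr
            nlinarith [sq_nonneg L]
        _ ≤ _ := by gcongr
    have h3 : Real.exp (L / 8) ^ 4 ≤ n * Real.exp (-M) := by
      rw [hnexp, ← Real.exp_add, ← Real.exp_nat_mul, Real.exp_le_exp]
      push_cast
      linarith
    linarith
  have hfin : 2 * Real.exp (-M) < Real.exp (-(M / 2)) := by
    have h1 : Real.exp (-(M / 2)) = Real.exp (M / 2) * Real.exp (-M) := by
      rw [← Real.exp_add]; congr 1; ring
    rw [h1]
    have := Real.add_one_le_exp (M / 2)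
    exact mul_lt_mul_of_pos_right (by linarith) (Real.exp_pos _)
  rw [hrp]
  nlinarith [mul_le_mul_of_nonneg_left hpow hn'.le, mul_lt_mul_of_pos_left hfin hn']

/-- If all transversals of nonempty sets `V i` span an edge of a `k`-graph on `k` indices, then the
sets are pairwise disjoint: a common point would give a transversal with fewer than `k` points. -/
theorem disjoint_of_edges {k n : ℕ} (G : Finset (Finset (Fin n))) (hG : ∀ e ∈ G, #e = k)
    (V : Fin k → Finset (Fin n)) (hne : ∀ i, (V i).Nonempty)
    (hV : ∀ f : Fin k → Fin n, (∀ i, f i ∈ V i) → image f univ ∈ G) (i j : Fin k) (hij : i ≠ j) :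
    Disjoint (V i) (V j) := by
  rw [disjoint_left]
  intro x hi hj
  choose g hg using hne
  have hf : ∀ l, Function.update (Function.update g i x) j x l ∈ V l := by
    intro l
    by_cases hlj : l = j
    · subst hlj; simpa using hj
    · rw [Function.update_of_ne hlj]
      by_cases hli : l = i
      · subst hli; simpa using hi
      · rw [Function.update_of_ne hli]; exact hg l
  have hc := hG _ (hV _ hf)
  have hinj : Function.Injective (Function.update (Function.update g i x) j x) := by
    rw [← Set.injOn_univ, ← coe_univ, ← card_image_iff, hc]
    simp
  refine hij (hinj ?_)
  simp [Function.update_of_ne hij]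

/-- If the average codegree `n * a ^ (s ^ k)` provided by `hom_count` beats `T + k * s ^ 2`, then some family with injective rows has
more than `T` common neighbours. -/
theorem exists_family {k s n : ℕ} (hn0 : 0 < n) (G : Finset (Finset (Fin n)))
    (hG : ∀ e ∈ G, #e = k + 1) {a T : ℝ} (ha : 0 ≤ a) (hT0 : 0 ≤ T)
    (hcard : a * (n : ℝ) ^ (k + 1) / ((k + 1).factorial : ℝ) ≤ #G)
    (hT : T + k * s ^ 2 < n * a ^ (s ^ k)) :
    ∃ X : Fin k → Fin s → Fin n, (∀ i, Function.Injective (X i)) ∧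
      T < #{v | ∀ f : Fin k → Fin s, insert v (image (fun i => X i (f i)) univ) ∈ G} := by
  by_contra! hcon
  have hn' : (0 : ℝ) < n := by exact_mod_cast hn0
  have : Nonempty (Fin n) := ⟨⟨0, hn0⟩⟩
  have hhom := hom_count (A := Fin n) s k (B := Fin n)
    (fun y v => if insert v (image y univ) ∈ G then (1 : ℝ) else 0)
    (fun y v => by positivity)
  simp only [Fintype.card_fin] at hhom
  have hdens : a ≤ (∑ y : Fin k → Fin n, ∑ v, if insert v (image y univ) ∈ G then (1 : ℝ) else 0)
      / ((n : ℝ) ^ k * n) := by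
    rw [le_div_iff₀ (by positivity), ← pow_succ]
    refine le_trans ?_ (ordered_edges G hG)
    rwa [div_le_iff₀' (by positivity)] at hcard
  have hcodeg : ∀ X : Fin k → Fin s → Fin n,
      (∑ v, ∏ f : Fin k → Fin s,
        if insert v (image (fun i => X i (f i)) univ) ∈ G then (1 : ℝ) else 0)
      = #{v | ∀ f : Fin k → Fin s, insert v (image (fun i => X i (f i)) univ) ∈ G} := by
    intro X
    rw [← sum_boole]
    refine sum_congr rfl fun v _ => ?_
    rw [prod_boole]
    simp
  simp only [hcodeg] at hhom
  have hlow := (pow_le_pow_left₀ ha hdens (s ^ k)).trans hhom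
  rw [le_div_iff₀ (by positivity)] at hlow
  -- Families with injective rows contribute at most `T` each, all others at most `n` each.
  have hupp : ∑ X : Fin k → Fin s → Fin n,
      (#{v | ∀ f : Fin k → Fin s, insert v (image (fun i => X i (f i)) univ) ∈ G} : ℝ)
      ≤ (n : ℝ) ^ (s * k) * T + k * s ^ 2 * (n : ℝ) ^ (s * k) := by
    have hpt : ∀ X : Fin k → Fin s → Fin n,
        (#{v | ∀ f : Fin k → Fin s, insert v (image (fun i => X i (f i)) univ) ∈ G} : ℝ)
        ≤ T + if ¬ ∀ i, Function.Injective (X i) then (n : ℝ) else 0 := by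
      intro X
      by_cases h : ∀ i, Function.Injective (X i)
      · simpa [h] using hcon X h
      · have := card_le_univ
          ({v | ∀ f : Fin k → Fin s, insert v (image (fun i => X i (f i)) univ) ∈ G} :
            Finset (Fin n))
        rw [Fintype.card_fin] at this
        have : (#{v | ∀ f : Fin k → Fin s, insert v (image (fun i => X i (f i)) univ) ∈ G} : ℝ)
          ≤ n := by exact_mod_cast this
        rw [if_pos h]
        linarith
    refine (sum_le_sum fun X _ => hpt X).trans ?_
    rw [sum_add_distrib, ← sum_filter, sum_const, sum_const, nsmul_eq_mul, nsmul_eq_mul]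
    have h1 := card_not_injective (A := Fin n) s k
    rw [Fintype.card_fin] at h1
    have h2 : (#{X : Fin k → Fin s → Fin n | ¬ ∀ i, Function.Injective (X i)} : ℝ) * n
      ≤ k * s ^ 2 * (n : ℝ) ^ (s * k) := by exact_mod_cast h1
    have h3 : ((#(univ : Finset (Fin k → Fin s → Fin n)) : ℕ) : ℝ) = (n : ℝ) ^ (s * k) := by
      simp [pow_mul]
    rw [h3]
    exact add_le_add le_rfl h2
  have hpos : (0 : ℝ) < (n : ℝ) ^ (s * k) := by positivity
  nlinarith [mul_lt_mul_of_pos_left hT hpos]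

/-- The result for `(k+1)`-graphs in terms of `x = (log n) ^ (1 / k)`, for which the two bounds on
`a` say `1 ≤ a * x` and `a ≤ (k + 1)⁻³`. -/
theorem main_aux {k n s : ℕ} (hk : 2 ≤ k) (hn0 : 0 < n) {a x : ℝ} (hn : Real.log n = x ^ k)
    (hx : (k + 1 : ℝ) ^ 3 ≤ x) (hax : 1 ≤ a * x) (ha : a ≤ ((k + 1 : ℝ) ^ 3)⁻¹)
    (hs : s = ⌊a * x⌋₊)
    (G : Finset (Finset (Fin n))) (hG : ∀ e ∈ G, #e = k + 1)
    (hcard : a * (n : ℝ) ^ (k + 1) / ((k + 1).factorial : ℝ) ≤ #G) :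
    ∃ V : Fin (k + 1) → Finset (Fin n),
      (∀ i j, i ≠ j → Disjoint (V i) (V j)) ∧
      (∀ i : Fin k, #(V i.castSucc) = s) ∧
      #(V (Fin.last k)) = ⌈(n : ℝ) ^ (1 - a ^ (k - 1))⌉₊ ∧
      ∀ f : Fin (k + 1) → Fin n, (∀ i, f i ∈ V i) → image f univ ∈ G := by
  have hx0 : 0 < x := lt_of_lt_of_le (by positivity) hx
  have ha0 : 0 < a := by
    by_contra h
    push Not at h
    nlinarith
  have hsx : (s : ℝ) ≤ a * x := by rw [hs]; exact Nat.floor_le (by positivity)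
  have hs0 : 0 < s := by rw [hs]; exact Nat.floor_pos.2 hax
  obtain ⟨X, hX, hcod⟩ := exists_family hn0 G hG ha0.le (by positivity) hcard
    (numeric hk hn hn0 hx hax ha hsx)
  obtain ⟨W, hW, hWc⟩ := exists_subset_card_eq (Nat.ceil_le.2 hcod.le)
  have hedge : ∀ f : Fin (k + 1) → Fin n,
      (∀ i, f i ∈ (Fin.snoc (fun i => image (X i) univ) W : Fin (k + 1) → Finset (Fin n)) i) →
        image f univ ∈ G := by
    intro f hf
    have h1 : ∀ i : Fin k, ∃ j, X i j = f i.castSucc := fun i => by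
      simpa using hf i.castSucc
    choose g hg using h1
    have h2 : f (Fin.last k) ∈ W := by simpa using hf (Fin.last k)
    have h3 := (mem_filter.1 (hW h2)).2 g
    rw [image_univ_succ]
    simpa only [hg] using h3
  refine ⟨_, disjoint_of_edges G hG _ ?_ hedge, ?_, ?_, hedge⟩
  · intro i
    refine Fin.lastCases ?_ (fun i => ?_) i
    · rw [Fin.snoc_last, ← card_pos, hWc, Nat.ceil_pos]
      exact Real.rpow_pos_of_pos (by exact_mod_cast hn0) _
    · rw [Fin.snoc_castSucc]
      exact ⟨X i ⟨0, hs0⟩, mem_image_of_mem _ (mem_univ _)⟩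
  · intro i
    rw [Fin.snoc_castSucc, card_image_of_injective _ (hX i)]
    simp
  · rw [Fin.snoc_last, hWc]

end DenseHypergraph


/-- Theorem 1 of the paper: every `r`-graph on `n` vertices with at least `α n^r / r!`
edges contains a complete `r`-partite subgraph with `r-1` parts of size
`⌊α (ln n)^{1/(r-1)}⌋` and one part of size `⌈n^{1-α^{r-2}}⌉`. -/
theorem stmt_0 (r n : ℕ) (hr : 3 ≤ r) (hn : 0 < n) (α : ℝ)
    (hα₁ : Real.log n ^ (-1 / ((r : ℝ) - 1)) ≤ α) (hα₂ : α ≤ ((r : ℝ) ^ 3)⁻¹)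
    (G : Finset (Finset (Fin n))) (hGunif : ∀ e ∈ G, e.card = r)
    (hGcard : α * (n : ℝ) ^ r / (r.factorial : ℝ) ≤ (G.card : ℝ)) :
    ∃ V : Fin r → Finset (Fin n),
      (∀ i j, i ≠ j → Disjoint (V i) (V j)) ∧
      (∀ i : Fin r, (i : ℕ) < r - 1 →
        (V i).card = ⌊α * Real.log n ^ ((1 : ℝ) / ((r : ℝ) - 1))⌋₊) ∧
      (V ⟨r - 1, by omega⟩).card = ⌈(n : ℝ) ^ (1 - α ^ (r - 2))⌉₊ ∧
      ∀ f : Fin r → Fin n, (∀ i, f i ∈ V i) → Finset.image f Finset.univ ∈ G := by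
  classical
  obtain ⟨k, rfl⟩ : ∃ k, r = k + 1 := ⟨r - 1, by omega⟩
  have hk : 2 ≤ k := by omega
  have hcast : ((k + 1 : ℕ) : ℝ) - 1 = k := by push_cast; ring
  rw [hcast] at hα₁ ⊢
  have hk0 : (k : ℝ) ≠ 0 := by positivity
  have hsub : k + 1 - 2 = k - 1 := by omega
  rw [hsub]
  rcases Nat.lt_or_ge n 2 with h1 | h2
  -- For `n = 1` the logarithm vanishes, so the first `k` parts are empty.
  · obtain rfl : n = 1 := by omega
    refine ⟨Fin.snoc (fun _ : Fin k => (∅ : Finset (Fin 1))) Finset.univ, ?_, ?_, ?_, ?_⟩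
    · intro i j hij
      rcases Fin.eq_castSucc_or_eq_last i with ⟨i, rfl⟩ | rfl
      · simp
      · rcases Fin.eq_castSucc_or_eq_last j with ⟨j, rfl⟩ | rfl
        · simp
        · exact absurd rfl hij
    · intro i hi
      obtain ⟨i, rfl⟩ : ∃ i' : Fin k, i'.castSucc = i := ⟨⟨i, by omega⟩, rfl⟩
      rw [Fin.snoc_castSucc]
      simp [hk0]
    · change Finset.card ((Fin.snoc (fun _ : Fin k => (∅ : Finset (Fin 1))) Finset.univ :
        Fin (k + 1) → Finset (Fin 1)) (Fin.last k)) = _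
      simp
    · intro f hf
      have := hf (Fin.castSucc ⟨0, by omega⟩)
      rw [Fin.snoc_castSucc] at this
      simp at this
  · have hlog : 0 < Real.log n := Real.log_pos (by exact_mod_cast h2)
    set x := Real.log n ^ ((1 : ℝ) / k) with hx
    have hx0 : 0 < x := Real.rpow_pos_of_pos hlog _
    have hxk : Real.log n = x ^ k := by
      rw [hx, ← Real.rpow_natCast, ← Real.rpow_mul hlog.le, one_div_mul_cancel hk0, Real.rpow_one]
    have hinv : x⁻¹ ≤ α := by
      rwa [neg_div, Real.rpow_neg hlog.le] at hα₁
    rw [show ((k + 1 : ℕ) : ℝ) = (k : ℝ) + 1 by push_cast; ring] at hα₂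
    have hxge : (k + 1 : ℝ) ^ 3 ≤ x :=
      (inv_le_inv₀ hx0 (by positivity)).1 (hinv.trans hα₂)
    have hax : 1 ≤ α * x := by
      rwa [inv_le_iff_one_le_mul₀ hx0] at hinv
    obtain ⟨V, hd, hs, ht, he⟩ :=
      DenseHypergraph.main_aux hk hn hxk hxge hax hα₂ rfl G hGunif hGcard
    refine ⟨V, hd, fun i hi => ?_, ht, fun f hf => ?_⟩
    · exact hs ⟨i, by omega⟩
    · convert he f hf
end

section
/- Let r ≥ 3 and suppose n is a positive integer and α a real number with (ln n)^{-1/(r-1)} ≤ α ≤ r^{-3}. Let G be an r-uniform hypergraph on n vertices with at least α·n^r/r! edges. If positive integers s_1,…,s_{r−1} satisfy s_1·s_2···s_{r−1} ≤ α^{r−1}·ln n, then G contains a complete r-partite subgraph K_r(s_1,…,s_{r−1},t) for some integer t > n^{1−α^{r−2}}. -/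
/-!
Write `m = r - 1`, `S = s 0 ⋯ s (m-1)`, and view `G` as the set `E` of ordered `r`-tuples of
vertices whose underlying set is an edge; then `|E| = r! |G| ≥ α n ^ r`.

The parts are chosen one at a time. If a set of `(k+1)`-tuples has density at least `b`, the power
mean inequality applied to the numbers of first coordinates extending a given `k`-tuple shows that
an average `s`-set `A` of vertices extends (with every `x ∈ A` as first coordinate) a proportion of
at least `b ^ s - s² / n` of all `k`-tuples; the term `s² / n` accounts for repeated vertices and
costs at most a factor `2`. Fixing a good `A` and iterating over the remaining coordinates, the last
part retains at least `(α / 2 ^ m) ^ S * n` vertices (`exists_box`).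

Since `S ≤ α ^ m ln n` and `α (ln (1/α) + m ln 2) < 1/2` for `α ≤ r⁻³`, this exceeds
`n ^ (1 - α ^ (r - 2))` (`numeric_bounds`). Pairwise disjointness of the parts is automatic: a
common vertex would produce an edge with fewer than `r` vertices.
-/

open Finset in
/-- Falling factorials differ from powers by a lower order term. -/
lemma pow_sub_le_descFactorial (n d s : ℕ) (hd : d ≤ n) :
    (d : ℝ) ^ (s + 1) - ((s + 1 : ℕ) : ℝ) ^ 2 * (n : ℝ) ^ s ≤ (d.descFactorial (s + 1) : ℝ) := by
  induction s with
  | zero => simp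
  | succ s ih =>
    rw [Nat.descFactorial_succ]
    have h1 : (d : ℝ) - ((s + 1 : ℕ) : ℝ) ≤ ((d - (s + 1) : ℕ) : ℝ) := by
      have h : d ≤ d - (s + 1) + (s + 1) := by omega
      rw [sub_le_iff_le_add]
      exact_mod_cast h
    have hdn : (d : ℝ) ≤ n := by exact_mod_cast hd
    have h2 : (d.descFactorial (s + 1) : ℝ) ≤ (n : ℝ) ^ (s + 1) := by
      calc (d.descFactorial (s + 1) : ℝ) ≤ (d : ℝ) ^ (s + 1) := by
            exact_mod_cast Nat.descFactorial_le_pow d (s + 1)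
        _ ≤ _ := by gcongr
    have h3 : (0 : ℝ) ≤ (d.descFactorial (s + 1) : ℝ) := by positivity
    have h4 : ((d : ℝ) - ((s + 1 : ℕ) : ℝ)) * (d.descFactorial (s + 1) : ℝ) ≤
        ((d - (s + 1) : ℕ) : ℝ) * (d.descFactorial (s + 1) : ℝ) := by gcongr
    have h5 := mul_le_mul_of_nonneg_left ih (Nat.cast_nonneg (α := ℝ) d)
    have h6 : ((s + 1 : ℕ) : ℝ) * (d.descFactorial (s + 1) : ℝ) ≤
        ((s + 1 : ℕ) : ℝ) * (n : ℝ) ^ (s + 1) := by gcongr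
    have h7 : (d : ℝ) * (((s + 1 : ℕ) : ℝ) ^ 2 * (n : ℝ) ^ s) ≤
        ((s + 1 : ℕ) : ℝ) ^ 2 * (n : ℝ) ^ (s + 1) := by
      calc (d : ℝ) * (((s + 1 : ℕ) : ℝ) ^ 2 * (n : ℝ) ^ s)
          ≤ (n : ℝ) * (((s + 1 : ℕ) : ℝ) ^ 2 * (n : ℝ) ^ s) := by gcongr
        _ = _ := by ring
    have h8 : (((s + 1 : ℕ) : ℝ) ^ 2 + ((s + 1 : ℕ) : ℝ)) * (n : ℝ) ^ (s + 1) ≤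
        ((s + 1 + 1 : ℕ) : ℝ) ^ 2 * (n : ℝ) ^ (s + 1) := by
      gcongr
      push_cast
      nlinarith [Nat.cast_nonneg (α := ℝ) s]
    rw [Nat.cast_mul]
    have h9 : (d : ℝ) ^ (s + 1 + 1) = (d : ℝ) * (d : ℝ) ^ (s + 1) := by ring
    rw [h9]
    linarith

open Finset in
/-- One step of the greedy choice: a dense relation between `Fin n` and `Y` contains `A × N` with
`|A| = s` and `N` of density at least `b ^ s / 2`. -/
lemma exists_set {Y : Type*} [Fintype Y] [DecidableEq Y] [Nonempty Y] (n s : ℕ) (hs : 1 ≤ s)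
    (R : Fin n → Y → Prop) [∀ x y, Decidable (R x y)] (b : ℝ) (hb : 0 < b)
    (hR : b * ((n : ℝ) * Fintype.card Y) ≤ ∑ y, ((#{x | R x y} : ℕ) : ℝ))
    (hsn : (s : ℝ) ^ 2 ≤ n * (b ^ s / 2)) (hle : s ≤ n) :
    ∃ A : Finset (Fin n), #A = s ∧
      b ^ s / 2 * Fintype.card Y ≤ (#{y | ∀ x ∈ A, R x y} : ℝ) := by
  obtain ⟨s, rfl⟩ : ∃ k, s = k + 1 := ⟨s - 1, by omega⟩
  by_contra! hcon
  set M : ℝ := ((Fintype.card Y : ℕ) : ℝ) with hM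
  have hMpos : 0 < M := by rw [hM]; exact_mod_cast Fintype.card_pos
  have hn : (0 : ℝ) < n := by exact_mod_cast (by omega : 0 < n)
  have hdc : ∑ A ∈ powersetCard (s + 1) (univ : Finset (Fin n)), #{y | ∀ x ∈ A, R x y}
      = ∑ y, (#{x | R x y}).choose (s + 1) := by
    simp_rw [card_filter _ (univ : Finset Y)]
    rw [sum_comm]
    refine sum_congr rfl fun y _ => ?_
    rw [← card_filter, ← card_powersetCard]
    congr 1
    ext A
    simp only [mem_filter, mem_powersetCard, subset_univ, true_and]
    constructor
    · rintro ⟨h1, h2⟩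
      exact ⟨fun x hx => by simpa using h2 x hx, h1⟩
    · rintro ⟨h1, h2⟩
      exact ⟨h2, fun x hx => by simpa using h1 hx⟩
  have hne : (powersetCard (s + 1) (univ : Finset (Fin n))).Nonempty := by
    rw [powersetCard_nonempty]; simpa using hle
  have hlt : ((∑ A ∈ powersetCard (s + 1) (univ : Finset (Fin n)),
      #{y | ∀ x ∈ A, R x y} : ℕ) : ℝ) < (n.choose (s + 1) : ℝ) * (b ^ (s + 1) / 2 * M) := by
    rw [Nat.cast_sum]
    calc _ < ∑ A ∈ powersetCard (s + 1) (univ : Finset (Fin n)), b ^ (s + 1) / 2 * M :=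
          sum_lt_sum_of_nonempty hne fun A hA => hcon A (mem_powersetCard.1 hA).2
      _ = _ := by simp
  rw [hdc] at hlt
  have hf : (0 : ℝ) < ((s + 1).factorial : ℝ) := by positivity
  have hup : ∑ y, ((#{x | R x y}).descFactorial (s + 1) : ℝ) <
      (n : ℝ) ^ (s + 1) * (b ^ (s + 1) / 2 * M) := by
    calc ∑ y, ((#{x | R x y}).descFactorial (s + 1) : ℝ)
        = ((s + 1).factorial : ℝ) * ((∑ y, (#{x | R x y}).choose (s + 1) : ℕ) : ℝ) := by
          rw [Nat.cast_sum, mul_sum]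
          refine sum_congr rfl fun y _ => ?_
          rw [Nat.descFactorial_eq_factorial_mul_choose, Nat.cast_mul]
      _ < ((s + 1).factorial : ℝ) * ((n.choose (s + 1) : ℝ) * (b ^ (s + 1) / 2 * M)) := by gcongr
      _ = (n.descFactorial (s + 1) : ℝ) * (b ^ (s + 1) / 2 * M) := by
          rw [Nat.descFactorial_eq_factorial_mul_choose, Nat.cast_mul]; ring
      _ ≤ _ := by
          gcongr
          exact_mod_cast Nat.descFactorial_le_pow n (s + 1)
  have hlow : ∑ y, ((#{x | R x y} : ℕ) : ℝ) ^ (s + 1) - M * (((s + 1 : ℕ) : ℝ) ^ 2 * (n : ℝ) ^ s) ≤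
      ∑ y, ((#{x | R x y}).descFactorial (s + 1) : ℝ) := by
    calc _ = ∑ y, (((#{x | R x y} : ℕ) : ℝ) ^ (s + 1) - ((s + 1 : ℕ) : ℝ) ^ 2 * (n : ℝ) ^ s) := by
          rw [sum_sub_distrib]; simp [hM]
      _ ≤ _ := by
          refine sum_le_sum fun y _ => pow_sub_le_descFactorial n _ s ?_
          simpa using card_le_univ (α := Fin n) {x | R x y}
  have hpm : (b * n) ^ (s + 1) * M ≤ ∑ y, ((#{x | R x y} : ℕ) : ℝ) ^ (s + 1) := by
    have h := pow_sum_div_card_le_sum_pow (s := (univ : Finset Y))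
      (f := fun y => ((#{x | R x y} : ℕ) : ℝ)) (n := s) (fun _ _ => by positivity)
    refine le_trans ?_ h
    rw [card_univ, le_div_iff₀ (by positivity)]
    calc (b * n) ^ (s + 1) * M * M ^ s = (b * (n * M)) ^ (s + 1) := by ring
      _ ≤ _ := by gcongr
  have herr : M * (((s + 1 : ℕ) : ℝ) ^ 2 * (n : ℝ) ^ s) ≤
      M * ((n * (b ^ (s + 1) / 2)) * (n : ℝ) ^ s) := by gcongr
  have h1 : (b * n) ^ (s + 1) * M = 2 * ((n : ℝ) ^ (s + 1) * (b ^ (s + 1) / 2 * M)) := by ring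
  have h2 : M * ((n * (b ^ (s + 1) / 2)) * (n : ℝ) ^ s) =
      (n : ℝ) ^ (s + 1) * (b ^ (s + 1) / 2 * M) := by ring
  linarith

open Finset in
/-- A set of `(m+1)`-tuples of density `b` contains a box whose first `m` sides have the prescribed
sizes and whose last side has at least `(b / 2 ^ m) ^ S * n` elements, `S` being the product of the
prescribed sizes. The hypothesis `S² ≤ n (b / 2 ^ m) ^ S` makes the loss from repeated vertices
at most a factor `2` at each of the `m` steps. -/
lemma exists_box (n m : ℕ) : ∀ (s : ℕ → ℕ) (_ : ∀ i < m, 1 ≤ s i)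
    (E : Finset (Fin (m + 1) → Fin n)) (b : ℝ) (_ : 0 < b) (_ : b ≤ 1)
    (_ : b * (n : ℝ) ^ (m + 1) ≤ #E)
    (_ : ((∏ i ∈ range m, s i : ℕ) : ℝ) ^ 2 ≤ n * (b / 2 ^ m) ^ (∏ i ∈ range m, s i)),
    ∃ V : Fin (m + 1) → Finset (Fin n),
      (∀ i : Fin (m + 1), (i : ℕ) < m → #(V i) = s i) ∧
      (b / 2 ^ m) ^ (∏ i ∈ range m, s i) * n ≤ #(V (Fin.last m)) ∧
      ∀ f : Fin (m + 1) → Fin n, (∀ i, f i ∈ V i) → f ∈ E := by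
  induction m with
  | zero =>
    intro s _ E b hb hb1 hE _
    refine ⟨fun _ => E.image fun f => f 0, fun i hi => absurd hi (by omega), ?_, ?_⟩
    · rw [card_image_of_injective]
      · simpa using hE
      · intro f g h
        funext i
        rw [show i = 0 from Fin.ext (by omega)]
        exact h
    · intro f hf
      obtain ⟨g, hg, hgf⟩ := mem_image.1 (hf 0)
      have : g = f := by
        funext i
        rw [show i = 0 from Fin.ext (by omega)]
        exact hgf
      exact this ▸ hg
  | succ m ih =>
    intro s hs E b hb hb1 hE hS
    set S' := ∏ i ∈ range m, s (i + 1) with hS'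
    have hprod : ∏ i ∈ range (m + 1), s i = S' * s 0 := prod_range_succ' _ _
    rw [hprod] at hS
    rw [hprod]
    have hs0 : 1 ≤ s 0 := hs 0 (by omega)
    have hS'1 : 1 ≤ S' := Nat.one_le_iff_ne_zero.2 <| prod_ne_zero_iff.2 fun i hi => by
      have := hs (i + 1) (by simpa using hi)
      omega
    set c : ℝ := b / 2 ^ (m + 1) with hc
    have hc0 : 0 < c := by positivity
    have h2 : (1 : ℝ) ≤ 2 ^ (m + 1) := one_le_pow₀ (by norm_num)
    have hcb : c ≤ b := div_le_self hb.le h2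
    have hc1 : c ≤ 1 := hcb.trans hb1
    -- `b' = b ^ s 0 / 2` is the density left after fixing the first part.
    have hcs : c ^ s 0 ≤ b ^ s 0 / 2 / 2 ^ m := by
      rw [hc, div_pow, div_div, ← pow_succ']
      gcongr
      exact le_self_pow₀ h2 (by omega)
    have hcS : c ^ (S' * s 0) ≤ (b ^ s 0 / 2 / 2 ^ m) ^ S' := by
      rw [mul_comm, pow_mul]
      gcongr
    have hnpos : 0 < n := by
      rcases Nat.eq_zero_or_pos n with h | h
      · subst h
        have : (1 : ℝ) ≤ ((S' * s 0 : ℕ) : ℝ) := by exact_mod_cast Nat.mul_pos hS'1 hs0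
        simp only [Nat.cast_zero, zero_mul] at hS
        nlinarith
      · exact h
    have : NeZero n := ⟨hnpos.ne'⟩
    have hsS : (s 0 : ℝ) ≤ ((S' * s 0 : ℕ) : ℝ) := by exact_mod_cast Nat.le_mul_of_pos_left _ hS'1
    have hSS : (S' : ℝ) ≤ ((S' * s 0 : ℕ) : ℝ) := by exact_mod_cast Nat.le_mul_of_pos_right _ hs0
    have hcond : (s 0 : ℝ) ^ 2 ≤ n * (b ^ s 0 / 2) := by
      calc (s 0 : ℝ) ^ 2 ≤ ((S' * s 0 : ℕ) : ℝ) ^ 2 := by gcongr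
        _ ≤ n * c ^ (S' * s 0) := hS
        _ ≤ n * c ^ s 0 := by
            gcongr 1
            exact pow_le_pow_of_le_one hc0.le hc1 (Nat.le_mul_of_pos_left _ hS'1)
        _ ≤ n * (b ^ s 0 / 2) := by
            gcongr
            exact hcs.trans (div_le_self (by positivity) (one_le_pow₀ (by norm_num)))
    have hb'1 : b ^ s 0 / 2 ≤ 1 := by
      have : b ^ s 0 ≤ 1 := pow_le_one₀ hb.le hb1
      linarith
    have hsn : s 0 ≤ n := by
      have h1 : (s 0 : ℝ) ^ 2 ≤ n := hcond.trans (by nlinarith [Nat.cast_nonneg (α := ℝ) n])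
      have h3 : s 0 ^ 2 ≤ n := by exact_mod_cast h1
      nlinarith
    classical
    have hcount : #E = ∑ y : Fin (m + 1) → Fin n,
        #{x : Fin n | (Fin.cons x y : Fin (m + 2) → Fin n) ∈ E} := by
      rw [← Finset.card_sigma]
      symm
      refine card_bij (fun p _ => Fin.cons p.2 p.1) ?_ ?_ ?_
      · rintro ⟨y, x⟩ h
        simpa using h
      · rintro ⟨y, x⟩ _ ⟨y', x'⟩ _ h
        obtain ⟨h1, h2⟩ := Fin.cons_injective2 h
        simp only at h1 h2
        subst h1 h2
        rfl
      · intro f hf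
        exact ⟨⟨Fin.tail f, f 0⟩, by simpa using hf, by simp⟩
    obtain ⟨A, hA, hN⟩ := exists_set (Y := Fin (m + 1) → Fin n) n (s 0) hs0
      (fun x y => (Fin.cons x y : Fin (m + 2) → Fin n) ∈ E) b hb
      (by
        rw [← Nat.cast_sum, ← hcount]
        refine le_trans (le_of_eq ?_) hE
        simp only [Fintype.card_fun, Fintype.card_fin]
        push_cast
        ring) hcond hsn
    obtain ⟨V, hV1, hV2, hV3⟩ := ih (fun i => s (i + 1)) (fun i hi => hs (i + 1) (by omega))
      _ (b ^ s 0 / 2) (by positivity) hb'1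
      (by
        refine le_trans (le_of_eq ?_) hN
        simp)
      (by
        calc ((S' : ℕ) : ℝ) ^ 2 ≤ ((S' * s 0 : ℕ) : ℝ) ^ 2 := by gcongr
          _ ≤ n * c ^ (S' * s 0) := hS
          _ ≤ _ := by gcongr)
    refine ⟨Fin.cons A V, ?_, ?_, ?_⟩
    · intro i
      refine Fin.cases ?_ (fun j => ?_) i
      · intro _
        simpa using hA
      · intro hj
        simpa using hV1 j (by simpa using hj)
    · have : (Fin.cons A V : Fin (m + 2) → Finset (Fin n)) (Fin.last (m + 1)) =
          V (Fin.last m) := by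
        rw [← Fin.succ_last, Fin.cons_succ]
      rw [this]
      refine le_trans ?_ hV2
      gcongr
    · intro f hf
      have h1 := hV3 (Fin.tail f) fun i => by simpa [Fin.tail] using hf i.succ
      simp only [mem_filter, mem_univ, true_and] at h1
      simpa using h1 (f 0) (by simpa using hf 0)

open Finset in
/-- Every edge of a uniform hypergraph underlies at least (in fact exactly) `r!` ordered tuples. -/
lemma card_tuples (r n : ℕ) (G : Finset (Finset (Fin n))) (hG : ∀ e ∈ G, #e = r) :
    #G * r.factorial ≤ #{f : Fin r → Fin n | image f univ ∈ G} := by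
  rw [card_eq_sum_card_fiberwise (f := fun f : Fin r → Fin n => image f univ) (t := G)
    (fun f hf => by simpa using hf), ← smul_eq_mul]
  refine card_nsmul_le_sum _ _ _ fun e he => ?_
  have hcard : Fintype.card (Fin r) = Fintype.card e := by simp [hG e he]
  have h := Fintype.card_equiv (Fintype.equivOfCardEq hcard)
  rw [Fintype.card_fin] at h
  rw [← h, ← card_univ]
  refine card_le_card_of_injOn (fun σ i => (σ i : Fin n)) ?_ ?_
  · intro σ _
    have himg : image (fun i => (σ i : Fin n)) univ = e := by
      ext v
      simp only [mem_image, mem_univ, true_and]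
      constructor
      · rintro ⟨i, rfl⟩
        exact (σ i).2
      · intro hv
        exact ⟨σ.symm ⟨v, hv⟩, by simp⟩
    simp [himg, he]
  · intro σ _ τ _ h
    ext i
    have := congrFun h i
    simpa using congrArg Fin.val this

/-- The density `(α / 2 ^ m) ^ S` is large enough both for `exists_box` to apply (the first bound,
which controls repeated vertices) and for the size required of the last part. -/
lemma numeric_bounds (m n S : ℕ) (hm : 2 ≤ m) (hn : 0 < n) (hS : 1 ≤ S) (α : ℝ) (hα0 : 0 < α)
    (hα : α ≤ (((m + 1 : ℕ) : ℝ) ^ 3)⁻¹) (hSα : (S : ℝ) ≤ α ^ m * Real.log n) :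
    (S : ℝ) ^ 2 ≤ n * (α / 2 ^ m) ^ S ∧
      (n : ℝ) ^ (1 - α ^ (m - 1)) < (α / 2 ^ m) ^ S * n := by
  obtain ⟨k, rfl⟩ : ∃ k, m = k + 1 := ⟨m - 1, by omega⟩
  have hn' : (0 : ℝ) < n := by exact_mod_cast hn
  have hS' : (1 : ℝ) ≤ S := by exact_mod_cast hS
  have hk : (1 : ℝ) ≤ k := by exact_mod_cast (by omega : 1 ≤ k)
  set L := Real.log n with hL
  simp only [Nat.add_sub_cancel]
  have hr3 : α * ((k : ℝ) + 2) ^ 3 ≤ 1 := by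
    have h := mul_le_mul_of_nonneg_right hα
      (by positivity : (0 : ℝ) ≤ ((k + 1 + 1 : ℕ) : ℝ) ^ 3)
    rw [inv_mul_cancel₀ (by positivity)] at h
    push_cast at h
    rw [add_assoc] at h
    norm_num at h
    exact h
  have hα27 : α ≤ 1 / 27 := by
    have : (27 : ℝ) ≤ ((k : ℝ) + 2) ^ 3 := by
      calc (27 : ℝ) = 3 ^ 3 := by norm_num
        _ ≤ _ := by gcongr; linarith
    nlinarith
  have hαk : α * ((k : ℝ) + 1) ≤ 1 / 9 := by
    have : 9 * ((k : ℝ) + 1) ≤ ((k : ℝ) + 2) ^ 3 := by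
      nlinarith [mul_nonneg (sub_nonneg.2 hk) (sub_nonneg.2 hk)]
    nlinarith
  have hlog2 := Real.log_two_lt_d9
  have hlog2' := Real.log_two_gt_d9
  -- `log x ≤ x / 8 - 1 + log 8` at `x = 1 / α`
  have hlogα : α * (-Real.log α) ≤ 1 / 8 + α * 2 := by
    have h := Real.log_le_sub_one_of_pos (x := α⁻¹ / 8) (by positivity)
    rw [Real.log_div (by positivity) (by norm_num), Real.log_inv,
      show (8 : ℝ) = 2 ^ 3 by norm_num, Real.log_pow] at h
    push_cast at h
    have h1 : -Real.log α ≤ α⁻¹ / 8 + 2 := by linarith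
    have h2 := mul_le_mul_of_nonneg_left h1 hα0.le
    rw [mul_add, mul_div_assoc', mul_inv_cancel₀ hα0.ne'] at h2
    exact h2
  have hkey : α * (-Real.log α + ((k : ℝ) + 1) * Real.log 2) < 1 / 2 := by
    have : α * ((k : ℝ) + 1) * Real.log 2 ≤ 1 / 9 := by nlinarith
    nlinarith
  set q := -Real.log α + ((k : ℝ) + 1) * Real.log 2 with hq
  have hq0 : 0 ≤ q := by
    have := Real.log_nonpos hα0.le (by linarith)
    have : 0 ≤ ((k : ℝ) + 1) * Real.log 2 := by positivity
    linarith
  have hα1 : α ≤ 1 := by linarith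
  have hLpos : 0 < L := by
    by_contra! h
    have : α ^ (k + 1) * L ≤ 0 := mul_nonpos_of_nonneg_of_nonpos (by positivity) h
    linarith
  have hSq : (S : ℝ) * q < α ^ k * L / 2 := by
    have hp : 0 < α ^ k * L := by positivity
    calc (S : ℝ) * q ≤ (α ^ (k + 1) * L) * q := by gcongr
      _ = α ^ k * L * (α * q) := by ring
      _ < α ^ k * L * (1 / 2) := by gcongr
      _ = _ := by ring
  have hexp : (α / 2 ^ (k + 1)) ^ S = Real.exp (-(S * q)) := by
    rw [← Real.exp_log (show 0 < (α / 2 ^ (k + 1)) ^ S by positivity), Real.log_pow,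
      Real.log_div hα0.ne' (by positivity), Real.log_pow]
    congr 1
    push_cast
    rw [hq]
    ring
  have hnexp : (n : ℝ) = Real.exp L := (Real.exp_log hn').symm
  have hαk1 : α ^ k ≤ α := pow_le_of_le_one hα0.le hα1 (by omega)
  have hαkL : α ^ k * L ≤ L / 27 := by nlinarith
  have hSL : (S : ℝ) ≤ L / 27 := by
    refine hSα.trans (le_trans ?_ hαkL)
    gcongr ?_ * L
    exact pow_le_pow_of_le_one hα0.le hα1 (by omega)
  rw [hexp]
  constructor
  · have h1 : (S : ℝ) ≤ Real.exp S := by linarith [Real.add_one_le_exp (S : ℝ)]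
    calc (S : ℝ) ^ 2 ≤ Real.exp S ^ 2 := by gcongr
      _ = Real.exp (2 * S) := by rw [← Real.exp_nat_mul]; norm_num
      _ ≤ Real.exp (L + -(S * q)) := by
          apply Real.exp_le_exp.2
          linarith
      _ = _ := by rw [Real.exp_add, ← hnexp]
  · rw [Real.rpow_def_of_pos hn', ← hL]
    calc Real.exp (L * (1 - α ^ k)) < Real.exp (-(S * q) + L) := by
          apply Real.exp_lt_exp.2
          have : 0 < α ^ k * L := by positivity
          nlinarith
      _ = _ := by rw [Real.exp_add, ← hnexp]


/-- Theorem 2 of the paper: if `G` is an `r`-graph on `n` vertices with at least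
`α n^r / r!` edges and the positive integers `s 0, …, s (r-2)` satisfy
`s 0 ⋯ s (r-2) ≤ α^{r-1} ln n`, then `G` contains a complete `r`-partite subgraph
with parts of sizes `s 0, …, s (r-2), t` for some `t > n^{1-α^{r-2}}`. -/
theorem stmt_1 (r n : ℕ) (hr : 3 ≤ r) (hn : 0 < n) (α : ℝ)
    (hα₁ : Real.log n ^ (-1 / ((r : ℝ) - 1)) ≤ α) (hα₂ : α ≤ ((r : ℝ) ^ 3)⁻¹)
    (G : Finset (Finset (Fin n))) (hGunif : ∀ e ∈ G, e.card = r)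
    (hGcard : α * (n : ℝ) ^ r / (r.factorial : ℝ) ≤ (G.card : ℝ))
    (s : ℕ → ℕ) (hs : ∀ i < r - 1, 1 ≤ s i)
    (hsprod : ((∏ i ∈ Finset.range (r - 1), s i : ℕ) : ℝ) ≤ α ^ (r - 1) * Real.log n) :
    ∃ V : Fin r → Finset (Fin n),
      (∀ i j, i ≠ j → Disjoint (V i) (V j)) ∧
      (∀ i : Fin r, (i : ℕ) < r - 1 → (V i).card = s i) ∧
      (n : ℝ) ^ (1 - α ^ (r - 2)) < ((V ⟨r - 1, by omega⟩).card : ℝ) ∧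
      ∀ f : Fin r → Fin n, (∀ i, f i ∈ V i) → Finset.image f Finset.univ ∈ G := by
  obtain ⟨m, rfl⟩ : ∃ m, r = m + 1 := ⟨r - 1, by omega⟩
  simp only [Nat.add_sub_cancel] at hs hsprod
  have hS1 : 1 ≤ ∏ i ∈ Finset.range m, s i :=
    Nat.one_le_iff_ne_zero.2 <| Finset.prod_ne_zero_iff.2 fun i hi => by
      have := hs i (by simpa using hi)
      omega
  have hS1' : (1 : ℝ) ≤ ((∏ i ∈ Finset.range m, s i : ℕ) : ℝ) := by exact_mod_cast hS1
  have hα0 : 0 < α := by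
    have h0 : 0 ≤ α := le_trans (Real.rpow_nonneg (Real.log_natCast_nonneg n) _) hα₁
    refine lt_of_le_of_ne h0 fun h => ?_
    rw [← h, zero_pow (by omega), zero_mul] at hsprod
    linarith
  have hα1 : α ≤ 1 := hα₂.trans (inv_le_one_of_one_le₀ (one_le_pow₀ (by
    push_cast
    linarith [Nat.cast_nonneg (α := ℝ) m])))
  obtain ⟨hb1, hb2⟩ := numeric_bounds m n _ (by omega) hn hS1 α hα0 hα₂ hsprod
  have hE : α * (n : ℝ) ^ (m + 1) ≤
      (({f : Fin (m + 1) → Fin n | Finset.image f Finset.univ ∈ G} : Finset _).card : ℝ) := by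
    have h1 := card_tuples (m + 1) n G hGunif
    have h2 : (G.card : ℝ) * ((m + 1).factorial : ℝ) ≤
      (({f : Fin (m + 1) → Fin n | Finset.image f Finset.univ ∈ G} : Finset _).card : ℝ) := by
      exact_mod_cast h1
    rw [div_le_iff₀ (by positivity)] at hGcard
    exact hGcard.trans h2
  obtain ⟨V, hV1, hV2, hV3⟩ := exists_box n m s hs _ α hα0 hα1 hE hb1
  have hV3' : ∀ f : Fin (m + 1) → Fin n, (∀ i, f i ∈ V i) → Finset.image f Finset.univ ∈ G :=
    fun f hf => by simpa using hV3 f hf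
  have hlast := hb2.trans_le hV2
  refine ⟨V, ?_, fun i hi => hV1 i (by simpa using hi), hlast, hV3'⟩
  have hne : ∀ i, (V i).Nonempty := by
    intro i
    rw [← Finset.card_pos]
    rcases Nat.lt_or_ge i m with h | h
    · rw [hV1 i h]
      exact hs i h
    · have hi : i = Fin.last m := Fin.ext (by simp; omega)
      rw [hi]
      have h0 : (0 : ℝ) < ((V (Fin.last m)).card : ℝ) :=
        lt_of_le_of_lt (Real.rpow_nonneg (Nat.cast_nonneg n) _) hlast
      exact_mod_cast h0
  choose g hg using hne
  intro i j hij
  rw [Finset.disjoint_left]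
  intro v hvi hvj
  -- A tuple through `v` in both positions would give an edge with at most `m` vertices.
  have hf := hV3' (Function.update (Function.update g i v) j v) fun k => by
    by_cases hkj : k = j
    · subst hkj; simpa using hvj
    · by_cases hki : k = i
      · subst hki; simpa [hkj] using hvi
      · simpa [hkj, hki] using hg k
  have hcard := hGunif _ hf
  have hinj := Finset.card_image_iff.1 (hcard.trans (by simp : m + 1 = (Finset.univ : Finset (Fin (m + 1))).card))
  exact hij (hinj (by simp) (by simp) (by simp [hij]))
end

section
/- Let r ≥ 2, let U_1,…,U_r be sets each of size n, and let M ⊆ U_1 × ⋯ × U_r satisfy |M| ≥ α·n^r, where α is a real number with 2^r·exp(−(1/r)·(ln n)^{1/r}) ≤ α ≤ 1. If positive integers s_1,…,s_r satisfy s_1·s_2···s_r ≤ ln n, then |B_M(s_1,…,s_r)| ≥ (α/2^r)^{r·s_1·s_2···s_r} · C(n,s_1)·C(n,s_2)···C(n,s_r), where C(n,s) denotes the binomial coefficient. -/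
/-!
Write `q = α / 2 ^ r`. The proof is an induction on the number of coordinates with `q` held fixed.
Removing a coordinate `p`, an averaging argument gives at least `2 * q * n` elements `u ∈ U p` whose
link `{g | (u, g) ∈ M}` still has density at least `2 ^ (r - 1) * q` (`card_good`). Each such link
contains many `(r - 1)`-dimensional boxes by induction, so on average such a box `R` extends by many
`u` (`sum_deg_eq`). As `R` with degree `d` yields `d.choose (s p)` boxes of `M` (`sum_choose_le`),
the power mean inequality (`convex_bound`) finishes the step, provided that the degrees dominate
`s p`, in the form `s p - 1 ≤ n * q ^ E`, where `E` exceeds `r - 1` times the product of the other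
side lengths.

If the coordinate removed first carries the largest `s i`, this one inequality implies those needed
at all later steps. It follows from `q ≥ exp (-(log n) ^ (1 / r) / r)` and `∏ s i ≤ log n`
(`size_bound`).
-/

open Finset in
/-- The boxes `V 0 × ⋯ × V (r - 1) ⊆ M` with `V i ⊆ U i` and `|V i| = s i`, as a finset. -/
noncomputable def boxes {γ : Type*} [DecidableEq γ] {r : ℕ} (U : Fin r → Finset γ)
    (M : Finset (Fin r → γ)) (s : Fin r → ℕ) : Finset (Fin r → Finset γ) :=
  (Fintype.piFinset fun i => (U i).powersetCard (s i)).filter fun V => Fintype.piFinset V ⊆ M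

open Finset in
/-- The link of `u` in `M` at the coordinate `p`: the tuples `g` such that inserting `u` into `g` at
position `p` gives an element of `M`. -/
noncomputable def linkAt {γ : Type*} [DecidableEq γ] {r : ℕ} (p : Fin (r + 1))
    (U : Fin (r + 1) → Finset γ) (M : Finset (Fin (r + 1) → γ)) (u : γ) : Finset (Fin r → γ) :=
  (Fintype.piFinset fun j => U (p.succAbove j)).filter fun g => p.insertNth (α := fun _ => γ) u g ∈ M

open Finset in
/-- The `u ∈ U p` extending the box `R` to a box in `M` with one-element side at `p`. -/
noncomputable def extenders {γ : Type*} [DecidableEq γ] {r : ℕ} (p : Fin (r + 1))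
    (U : Fin (r + 1) → Finset γ) (M : Finset (Fin (r + 1) → γ)) (R : Fin r → Finset γ) : Finset γ :=
  (U p).filter fun u => Fintype.piFinset R ⊆ linkAt p U M u

section Counting

open Finset

variable {γ : Type*} [DecidableEq γ] {r : ℕ}

theorem card_le_sum_link (p : Fin (r + 1)) (U : Fin (r + 1) → Finset γ)
    (M : Finset (Fin (r + 1) → γ)) (hMU : ∀ f ∈ M, ∀ i, f i ∈ U i) :
    M.card ≤ ∑ u ∈ U p, (linkAt p U M u).card := by
  rw [card_eq_sum_card_fiberwise (f := fun f => f p) (t := U p) (fun f hf => hMU f hf p)]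
  refine sum_le_sum fun u _ => ?_
  refine card_le_card_of_injOn (fun f => p.removeNth f) ?_ ?_
  · intro f hf
    simp only [coe_filter, Set.mem_ofPred_eq] at hf
    obtain ⟨hf, rfl⟩ := hf
    simp only [linkAt, coe_filter, Set.mem_ofPred_eq, Fintype.mem_piFinset]
    exact ⟨fun j => hMU f hf _, by simpa using hf⟩
  · intro f hf g hg h
    simp only [coe_filter, Set.mem_ofPred_eq] at hf hg
    rw [← Fin.insertNth_self_removeNth p f, ← Fin.insertNth_self_removeNth p g, hf.2, hg.2]
    simp only at h
    rw [h]

theorem sum_deg_eq (p : Fin (r + 1)) (U : Fin (r + 1) → Finset γ)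
    (M : Finset (Fin (r + 1) → γ)) (s : Fin (r + 1) → ℕ) :
    ∑ R ∈ Fintype.piFinset (fun j => (U (p.succAbove j)).powersetCard (s (p.succAbove j))),
        (extenders p U M R).card =
      ∑ u ∈ U p, (boxes (fun j => U (p.succAbove j)) (linkAt p U M u)
        (fun j => s (p.succAbove j))).card := by
  simp only [extenders, boxes, card_filter]
  exact sum_comm

/-- A box `R` together with an `s p`-element set of its extensions is a box of `M`. -/
theorem sum_choose_le (p : Fin (r + 1)) (U : Fin (r + 1) → Finset γ)
    (M : Finset (Fin (r + 1) → γ)) (s : Fin (r + 1) → ℕ) :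
    ∑ R ∈ Fintype.piFinset (fun j => (U (p.succAbove j)).powersetCard (s (p.succAbove j))),
        (extenders p U M R).card.choose (s p) ≤ (boxes U M s).card := by
  simp only [← card_powersetCard]
  rw [← card_sigma]
  refine card_le_card_of_injOn
    (fun x => p.insertNth (α := fun _ => Finset γ) x.2 x.1) ?_ ?_
  · rintro ⟨R, W⟩ h
    simp only [coe_sigma, Set.mem_sigma_iff, mem_coe, Fintype.mem_piFinset,
      mem_powersetCard] at h
    obtain ⟨hR, hW, hWc⟩ := h
    simp only [boxes, coe_filter, Set.mem_ofPred_eq, Fintype.mem_piFinset, mem_powersetCard]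
    refine ⟨?_, ?_⟩
    · rw [Fin.forall_iff_succAbove p]
      refine ⟨?_, fun j => ?_⟩
      · simp only [Fin.insertNth_apply_same]
        exact ⟨hW.trans (filter_subset _ _), hWc⟩
      · simp only [Fin.insertNth_apply_succAbove]
        exact hR j
    · intro f hf
      rw [Fintype.mem_piFinset, Fin.forall_iff_succAbove p] at hf
      simp only [Fin.insertNth_apply_same, Fin.insertNth_apply_succAbove] at hf
      have h1 := hW hf.1
      simp only [extenders, mem_filter] at h1
      have h2 : p.removeNth f ∈ linkAt p U M (f p) :=
        h1.2 (Fintype.mem_piFinset.2 fun j => hf.2 j)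
      simp only [linkAt, mem_filter] at h2
      simpa using h2.2
  · rintro ⟨R, W⟩ - ⟨R', W'⟩ - h
    simp only at h
    have h1 := congrFun h p
    have h2 : R = R' := by
      funext j
      simpa using congrFun h (p.succAbove j)
    simp only [Fin.insertNth_apply_same] at h1
    rw [h1, h2]

/-- At least `2 * q * n` of the links have density at least `2 ^ r * q`. For `r = 0` links have
at most one element and no factor is lost in the averaging, whereas for `r ≥ 1` averaging
gives `2 ^ r * q * n` of them. -/
theorem card_good (n : ℕ) (hn : 0 < n) (q : ℝ) (hq : 0 < q) (hq1 : q ≤ 1) (p : Fin (r + 1))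
    (U : Fin (r + 1) → Finset γ) (hU : ∀ i, (U i).card = n)
    (M : Finset (Fin (r + 1) → γ)) (hMU : ∀ f ∈ M, ∀ i, f i ∈ U i)
    (hM : 2 ^ (r + 1) * q * (n : ℝ) ^ (r + 1) ≤ (M.card : ℝ)) :
    2 * q * n ≤
      (((U p).filter fun u => 2 ^ r * q * (n : ℝ) ^ r ≤ ((linkAt p U M u).card : ℝ)).card : ℝ) := by
  set P : γ → Prop := fun u => 2 ^ r * q * (n : ℝ) ^ r ≤ ((linkAt p U M u).card : ℝ) with hP
  have hle : ∀ u, ((linkAt p U M u).card : ℝ) ≤ (n : ℝ) ^ r := by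
    intro u
    have : (linkAt p U M u).card ≤ n ^ r := by
      refine (card_filter_le _ _).trans ?_
      simp [Fintype.card_piFinset, hU]
    exact_mod_cast this
  have h1 : (M.card : ℝ) ≤ ∑ u ∈ U p, ((linkAt p U M u).card : ℝ) := by
    exact_mod_cast card_le_sum_link p U M hMU
  have hn' : (0 : ℝ) < n := by exact_mod_cast hn
  rw [← sum_filter_add_sum_filter_not (U p) P] at h1
  have h2 : ∑ u ∈ (U p).filter P, ((linkAt p U M u).card : ℝ) ≤
      ((U p).filter P).card * (n : ℝ) ^ r := by
    rw [← nsmul_eq_mul]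
    exact sum_le_card_nsmul _ _ _ fun u _ => hle u
  rcases Nat.eq_zero_or_pos r with rfl | hr
  · have h3 : ∑ u ∈ (U p).filter (fun u => ¬ P u), ((linkAt p U M u).card : ℝ) = 0 := by
      refine sum_eq_zero fun u hu => ?_
      have := (mem_filter.1 hu).2
      simp only [hP, pow_zero, one_mul, mul_one, not_le] at this
      have h4 : (linkAt p U M u).card < 1 := by exact_mod_cast this.trans_le hq1
      have : (linkAt p U M u).card = 0 := by omega
      simp [this]
    rw [h3, add_zero] at h1
    simp only [pow_zero, mul_one] at h2
    simp only [zero_add, pow_one] at hM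
    linarith
  · have h3 : ∑ u ∈ (U p).filter (fun u => ¬ P u), ((linkAt p U M u).card : ℝ) ≤
        n * (2 ^ r * q * (n : ℝ) ^ r) := by
      calc _ ≤ ∑ u ∈ (U p).filter (fun u => ¬ P u), 2 ^ r * q * (n : ℝ) ^ r :=
            sum_le_sum fun u hu => (not_le.1 (mem_filter.1 hu).2).le
        _ ≤ ∑ u ∈ U p, 2 ^ r * q * (n : ℝ) ^ r :=
            sum_le_sum_of_subset_of_nonneg (filter_subset _ _) fun _ _ _ => by positivity
        _ = _ := by rw [sum_const, hU, nsmul_eq_mul]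
    have h4 : (2 ^ r * q * n) * (n : ℝ) ^ r ≤ ((U p).filter P).card * (n : ℝ) ^ r := by
      have : (2 : ℝ) ^ (r + 1) * q * (n : ℝ) ^ (r + 1) =
        2 * ((2 ^ r * q * n) * (n : ℝ) ^ r) := by ring
      have : n * (2 ^ r * q * (n : ℝ) ^ r) = (2 ^ r * q * n) * (n : ℝ) ^ r := by ring
      linarith
    have h5 := le_of_mul_le_mul_right h4 (by positivity)
    have h6 : (2 : ℝ) ≤ 2 ^ r := le_self_pow₀ (by norm_num) (by omega)
    refine le_trans ?_ h5
    gcongr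

/-- If the average of `d` is at least `x + (s - 1)`, then the average of `(d i).choose s` is at least
`x ^ s / s!`, by `(d - (s - 1)) ^ s ≤ s! * d.choose s` and the power mean inequality. -/
theorem convex_bound {ι : Type*} (A : Finset ι) (d : ι → ℕ) (s : ℕ) (hs : 1 ≤ s) (x : ℝ)
    (hx : 0 ≤ x) (h : (A.card : ℝ) * (x + ((s : ℝ) - 1)) ≤ ∑ i ∈ A, (d i : ℝ)) :
    (A.card : ℝ) * (x ^ s / (s.factorial : ℝ)) ≤ ∑ i ∈ A, ((d i).choose s : ℝ) := by
  rcases A.eq_empty_or_nonempty with rfl | hA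
  · simp
  have hA0 : (0 : ℝ) < A.card := by exact_mod_cast hA.card_pos
  obtain ⟨t, rfl⟩ : ∃ t, s = t + 1 := ⟨s - 1, by omega⟩
  have h1 : ∀ i, ((d i - t : ℕ) : ℝ) ^ (t + 1) / ((t + 1).factorial : ℝ) ≤
      ((d i).choose (t + 1) : ℝ) := by
    intro i
    rw [div_le_iff₀ (by positivity), mul_comm]
    have := Nat.pow_sub_le_descFactorial (d i) (t + 1)
    rw [Nat.descFactorial_eq_factorial_mul_choose, Nat.add_sub_add_right] at this
    exact_mod_cast this
  have h2 : (A.card : ℝ) * x ≤ ∑ i ∈ A, ((d i - t : ℕ) : ℝ) := by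
    have : ∑ i ∈ A, ((d i : ℝ) - t) ≤ ∑ i ∈ A, ((d i - t : ℕ) : ℝ) := by
      refine sum_le_sum fun i _ => ?_
      have : d i ≤ (d i - t) + t := by omega
      have : (d i : ℝ) ≤ ((d i - t : ℕ) : ℝ) + t := by exact_mod_cast this
      linarith
    rw [sum_sub_distrib, sum_const, nsmul_eq_mul] at this
    push_cast at h
    linarith
  have h4 : ((A.card : ℝ) * x) ^ (t + 1) / (A.card : ℝ) ^ t ≤
      ∑ i ∈ A, ((d i - t : ℕ) : ℝ) ^ (t + 1) := by
    refine le_trans ?_ (pow_sum_div_card_le_sum_pow (s := A) (f := fun i => ((d i - t : ℕ) : ℝ))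
      (fun i _ => by positivity) t)
    gcongr
  have h5 : ((A.card : ℝ) * x) ^ (t + 1) / (A.card : ℝ) ^ t = A.card * x ^ (t + 1) := by
    field_simp
    ring
  rw [h5] at h4
  calc _ = (A.card * x ^ (t + 1)) / ((t + 1).factorial : ℝ) := by ring
    _ ≤ (∑ i ∈ A, ((d i - t : ℕ) : ℝ) ^ (t + 1)) / ((t + 1).factorial : ℝ) := by gcongr
    _ ≤ _ := by
      rw [sum_div]
      exact sum_le_sum fun i _ => h1 i

/-- The number `T` is the product of the side lengths other than `s p`, where `p` is the coordinate
that is removed first; at later steps any coordinate will do. -/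
theorem boxes_bound (n : ℕ) (hn : 0 < n) (q : ℝ) (hq : 0 < q) (hq1 : q ≤ 1) (E : ℕ) :
    ∀ (r : ℕ) (U : Fin r → Finset γ) (_ : ∀ i, (U i).card = n)
    (M : Finset (Fin r → γ)) (_ : ∀ f ∈ M, ∀ i, f i ∈ U i)
    (_ : 2 ^ r * q * (n : ℝ) ^ r ≤ (M.card : ℝ))
    (s : Fin r → ℕ) (_ : ∀ i, 1 ≤ s i) (_ : ∀ i, (s i : ℝ) - 1 ≤ n * q ^ E)
    (_ : 0 < r → ∃ p T, T * s p = ∏ i, s i ∧ (r - 1) * T + 1 ≤ E),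
    q ^ (r * ∏ i, s i) * ∏ i, (n.choose (s i) : ℝ) ≤ ((boxes U M s).card : ℝ) := by
  intro r
  induction r with
  | zero =>
    intro U hU M hMU hM s hs hsE hE
    simp only [pow_zero, one_mul, mul_one] at hM
    have h1 : 0 < M.card := by exact_mod_cast hq.trans_le hM
    obtain ⟨f, hf⟩ := card_pos.1 h1
    have h2 : 1 ≤ (boxes U M s).card := by
      refine card_pos.2 ⟨fun i => i.elim0, ?_⟩
      simp only [boxes, mem_filter, Fintype.mem_piFinset]
      refine ⟨fun i => i.elim0, fun g _ => ?_⟩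
      rwa [Subsingleton.elim g f]
    simpa using h2
  | succ r ih =>
    intro U hU M hMU hM s hs hsE hE
    obtain ⟨p, T, hT, hTE⟩ := hE (by omega)
    have hn' : (0 : ℝ) < n := by exact_mod_cast hn
    have hTp : T = ∏ j, s (p.succAbove j) := by
      rw [Fin.prod_univ_succAbove _ p, mul_comm] at hT
      exact Nat.eq_of_mul_eq_mul_left (hs p) hT
    have hT1 : 1 ≤ T := by
      rw [hTp]
      exact Nat.succ_le_of_lt (prod_pos fun j _ => hs _)
    rw [Nat.add_sub_cancel] at hTE
    have hgood := card_good n hn q hq hq1 p U hU M hMU hM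
    set G := (U p).filter fun u => 2 ^ r * q * (n : ℝ) ^ r ≤ ((linkAt p U M u).card : ℝ) with hG
    set U' : Fin r → Finset γ := fun j => U (p.succAbove j) with hU'
    set s' : Fin r → ℕ := fun j => s (p.succAbove j) with hs'
    set A := Fintype.piFinset (fun j => (U' j).powersetCard (s' j)) with hA
    have hAcard : (A.card : ℝ) = ∏ j, (n.choose (s' j) : ℝ) := by
      simp [hA, Fintype.card_piFinset, hU', hU]
    have hlink : ∀ u ∈ G, q ^ (r * T) * (A.card : ℝ) ≤
        ((boxes U' (linkAt p U M u) s').card : ℝ) := by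
      intro u hu
      rw [hAcard, hTp]
      refine ih U' (fun j => hU _) _ ?_ (mem_filter.1 hu).2 s' (fun j => hs _) (fun j => hsE _) ?_
      · intro f hf
        exact Fintype.mem_piFinset.1 (mem_filter.1 hf).1
      · intro hr
        obtain ⟨r, rfl⟩ : ∃ k, r = k + 1 := ⟨r - 1, by omega⟩
        refine ⟨0, ∏ j : Fin r, s' j.succ, ?_, ?_⟩
        · rw [Fin.prod_univ_succ, mul_comm]
        · refine le_trans ?_ hTE
          have : ∏ j : Fin r, s' j.succ ≤ T := by
            rw [hTp, Fin.prod_univ_succ]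
            exact Nat.le_mul_of_pos_left _ (hs _)
          gcongr
          omega
    have hsum : (A.card : ℝ) * (n * q ^ (r * T + 1) + ((s p : ℝ) - 1)) ≤
        ∑ R ∈ A, ((extenders p U M R).card : ℝ) := by
      have h1 : ∑ R ∈ A, ((extenders p U M R).card : ℝ) =
          ∑ u ∈ U p, ((boxes U' (linkAt p U M u) s').card : ℝ) := by
        exact_mod_cast sum_deg_eq p U M s
      have h2 : (s p : ℝ) - 1 ≤ n * q ^ (r * T + 1) := by
        refine (hsE p).trans ?_
        have := pow_le_pow_of_le_one hq.le hq1 hTE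
        gcongr
      rw [h1]
      calc _ ≤ (A.card : ℝ) * (n * q ^ (r * T + 1) + n * q ^ (r * T + 1)) := by gcongr
        _ = (2 * q * n) * (q ^ (r * T) * A.card) := by ring
        _ ≤ (G.card : ℝ) * (q ^ (r * T) * A.card) := by gcongr
        _ = ∑ u ∈ G, (q ^ (r * T) * (A.card : ℝ)) := by rw [sum_const, nsmul_eq_mul]
        _ ≤ ∑ u ∈ G, ((boxes U' (linkAt p U M u) s').card : ℝ) := sum_le_sum hlink
        _ ≤ _ := sum_le_sum_of_subset_of_nonneg (filter_subset _ _) fun _ _ _ => by positivity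
    have hconv := convex_bound A (fun R => (extenders p U M R).card) (s p) (hs p)
      (n * q ^ (r * T + 1)) (by positivity) hsum
    have hfin : ∑ R ∈ A, (((extenders p U M R).card.choose (s p) : ℕ) : ℝ) ≤
        ((boxes U M s).card : ℝ) := by
      exact_mod_cast sum_choose_le p U M s
    refine le_trans ?_ (hconv.trans hfin)
    rw [Fin.prod_univ_succAbove (fun i => (n.choose (s i) : ℝ)) p, ← hT, ← hAcard]
    have h3 : (n.choose (s p) : ℝ) ≤ (n : ℝ) ^ s p / ((s p).factorial : ℝ) :=
      Nat.choose_le_pow_div _ _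
    have h4 : q ^ ((r + 1) * (T * s p)) ≤ (q ^ (r * T + 1)) ^ s p := by
      rw [← pow_mul]
      refine pow_le_pow_of_le_one hq.le hq1 ?_
      rw [← mul_assoc]
      refine Nat.mul_le_mul_right _ ?_
      rw [add_mul r 1 T, one_mul]
      omega
    calc _ ≤ (q ^ (r * T + 1)) ^ s p * ((n : ℝ) ^ s p / ((s p).factorial : ℝ) * A.card) := by
          gcongr
      _ = _ := by rw [mul_pow]; ring

end Counting

/-- The inequality needed in the counting, for the largest side length `σ` and the product `T` of the
others. With `a = (log n) ^ (1 / r)` and `b = a ^ (r - 1) ≥ T`, for the logarithm `e` of a lower bound of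
the right-hand side, `2 * e` is at least `a * (b - T) + a * (a - 1) ≥ a * b / T - 1 ≥ σ - 1`, and
`2 * e ≤ exp e`. -/
theorem size_bound (r n σ T : ℕ) (hr : 2 ≤ r) (hn : 0 < n) (q : ℝ)
    (hq : Real.exp (-(1 / (r : ℝ)) * Real.log n ^ ((1 : ℝ) / (r : ℝ))) ≤ q)
    (hT1 : 1 ≤ T) (hσ1 : 1 ≤ σ)
    (hTσ : T ≤ σ ^ (r - 1)) (hL : ((T * σ : ℕ) : ℝ) ≤ Real.log n) :
    (σ : ℝ) - 1 ≤ n * q ^ ((r - 1) * T + 1) := by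
  set L := Real.log n with hLdef
  set a := L ^ ((1 : ℝ) / (r : ℝ)) with ha
  have hT1' : (1 : ℝ) ≤ T := by exact_mod_cast hT1
  have hσ1' : (1 : ℝ) ≤ σ := by exact_mod_cast hσ1
  have hL1 : 1 ≤ L := by
    refine le_trans ?_ hL
    exact_mod_cast Nat.mul_pos hT1 hσ1
  have ha1 : 1 ≤ a := Real.one_le_rpow hL1 (by positivity)
  have har : a ^ r = L := by
    rw [ha, one_div]
    exact Real.rpow_inv_natCast_pow (by linarith) (by omega)
  obtain ⟨m, rfl⟩ : ∃ m, r = m + 1 := ⟨r - 1, by omega⟩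
  have hm : (1 : ℝ) ≤ m := by exact_mod_cast (by omega : 1 ≤ m)
  rw [Nat.add_sub_cancel] at *
  push_cast at hL
  set b := a ^ m with hb
  have hab : a * b = L := by rw [← har, hb, pow_succ]; ring
  have hTσ' : (T : ℝ) ≤ (σ : ℝ) ^ m := by exact_mod_cast hTσ
  have hTb : (T : ℝ) ≤ b := by
    refine le_of_pow_le_pow_left₀ (Nat.succ_ne_zero m) (by positivity) ?_
    calc (T : ℝ) ^ (m + 1) = T ^ m * T := pow_succ _ _
      _ ≤ T ^ m * (σ : ℝ) ^ m := by gcongr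
      _ = (T * σ : ℝ) ^ m := by rw [mul_pow]
      _ ≤ L ^ m := by gcongr
      _ = b ^ (m + 1) := by rw [← har, hb, ← pow_mul, ← pow_mul, mul_comm]
  have hbern : 1 + m * (a - 1) ≤ b := by
    have := one_add_mul_le_pow (a := a - 1) (by linarith) m
    simpa [hb] using this
  set e : ℝ := L - (m * T + 1) * a / (m + 1) with he
  have hbound : (Real.exp e) ≤ n * q ^ (m * T + 1) := by
    have h1 : Real.exp L = n := Real.exp_log (by exact_mod_cast hn)
    calc Real.exp e = Real.exp L *
          Real.exp (-(1 / ((m + 1 : ℕ) : ℝ)) * a) ^ (m * T + 1) := by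
          rw [← Real.exp_nat_mul, ← Real.exp_add, he]
          congr 1
          push_cast
          field_simp
          ring
      _ ≤ _ := by
          rw [h1]
          gcongr
  have h2e : (σ : ℝ) - 1 ≤ 2 * e := by
    have h1 : e * (m + 1) = m * (a * (b - T)) + a * (b - 1) := by
      rw [he, ← hab]
      field_simp
      ring
    have h2 : 0 ≤ a * (b - T) := mul_nonneg (by linarith) (by linarith)
    have h3 : m * (a * (a - 1)) ≤ a * (b - 1) := by nlinarith
    have h4 : 0 ≤ a * (a - 1) := mul_nonneg (by linarith) (by linarith)
    have h5 : a * (b - T) + a * (a - 1) ≤ 2 * e := by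
      have h6 : (m : ℝ) * (a * (b - T) + a * (a - 1)) ≤ e * (m + 1) := by linarith
      have h7 : 0 ≤ (m - 1) * (a * (b - T) + a * (a - 1)) :=
        mul_nonneg (by linarith) (by linarith)
      refine le_of_mul_le_mul_right (a := (m + 1 : ℝ)) ?_ (by linarith)
      linarith
    have h8 : (σ : ℝ) ≤ a * (b - T) + a := by
      refine le_of_mul_le_mul_left (a := (T : ℝ)) ?_ (by linarith)
      have h9 : 0 ≤ a * ((b - T) * (T - 1)) :=
        mul_nonneg (by linarith) (mul_nonneg (by linarith) (by linarith))
      nlinarith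
    nlinarith [sq_nonneg (a - 1)]
  have hexp : 2 * e ≤ Real.exp e := by
    have h1 : Real.exp e = Real.exp (e / 2) ^ 2 := by
      rw [← Real.exp_nat_mul]
      congr 1
      push_cast
      ring
    have h2 := Real.add_one_le_exp (e / 2)
    have h3 : 0 ≤ e := by linarith
    rw [h1]
    nlinarith [sq_nonneg (e / 2 - 1)]
  linarith


/-- Theorem 4 of the paper: a lower bound on the number of boxes
`V 0 × ⋯ × V (r-1) ⊆ M` with `|V i| = s i`. -/
theorem stmt_3 {γ : Type*} [DecidableEq γ] (r n : ℕ) (hr : 2 ≤ r) (hn : 0 < n) (α : ℝ)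
    (hα₁ : (2 : ℝ) ^ r * Real.exp (-(1 / (r : ℝ)) * Real.log n ^ ((1 : ℝ) / (r : ℝ))) ≤ α)
    (hα₂ : α ≤ 1)
    (U : Fin r → Finset γ) (hU : ∀ i, (U i).card = n)
    (M : Finset (Fin r → γ)) (hMU : ∀ f ∈ M, ∀ i, f i ∈ U i)
    (hM : α * (n : ℝ) ^ r ≤ (M.card : ℝ))
    (s : Fin r → ℕ) (hs : ∀ i, 1 ≤ s i)
    (hsprod : ((∏ i, s i : ℕ) : ℝ) ≤ Real.log n) :
    (α / 2 ^ r) ^ (r * ∏ i, s i) * ∏ i, (n.choose (s i) : ℝ) ≤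
      (Set.ncard {V : Fin r → Finset γ | (∀ i, V i ⊆ U i) ∧ (∀ i, (V i).card = s i) ∧
        ∀ f : Fin r → γ, (∀ i, f i ∈ V i) → f ∈ M} : ℝ) := by
  set q : ℝ := α / 2 ^ r with hqdef
  have hqα : 2 ^ r * q = α := by rw [hqdef]; field_simp
  have hqe : Real.exp (-(1 / (r : ℝ)) * Real.log n ^ ((1 : ℝ) / (r : ℝ))) ≤ q := by
    rw [hqdef, le_div_iff₀ (by positivity), mul_comm]
    exact hα₁
  have hq : 0 < q := (Real.exp_pos _).trans_le hqe
  have hq1 : q ≤ 1 := by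
    rw [hqdef, div_le_one (by positivity)]
    exact hα₂.trans (one_le_pow₀ (by norm_num))
  obtain ⟨r, rfl⟩ : ∃ m, r = m + 1 := ⟨r - 1, by omega⟩
  obtain ⟨p, hp⟩ := Finite.exists_max s
  set T := ∏ j, s (p.succAbove j) with hT
  have hTs : T * s p = ∏ i, s i := by rw [Fin.prod_univ_succAbove _ p, mul_comm]
  have hTle : T ≤ s p ^ (r + 1 - 1) := by
    rw [hT]
    refine (Finset.prod_le_pow_card _ _ (s p) fun j _ => hp _).trans ?_
    simp
  have hsize := size_bound (r + 1) n (s p) T hr hn q hqe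
    (Nat.succ_le_of_lt (Finset.prod_pos fun j _ => hs _)) (hs p) hTle (by rw [hTs]; exact hsprod)
  have key := boxes_bound n hn q hq hq1 ((r + 1 - 1) * T + 1) (r + 1) U hU M hMU
    (by rw [hqα]; exact hM) s hs
    (fun i => le_trans (sub_le_sub_right (by exact_mod_cast hp i) 1) hsize)
    (fun _ => ⟨p, T, hTs, le_rfl⟩)
  have hset : {V : Fin (r + 1) → Finset γ | (∀ i, V i ⊆ U i) ∧ (∀ i, (V i).card = s i) ∧
        ∀ f : Fin (r + 1) → γ, (∀ i, f i ∈ V i) → f ∈ M} = ↑(boxes U M s) := by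
    ext V
    simp only [boxes, Set.mem_ofPred_eq, Finset.coe_filter, Fintype.mem_piFinset,
      Finset.mem_powersetCard, Finset.subset_iff, forall_and, and_assoc]
  rw [hset, Set.ncard_coe_finset]
  exact key
end
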